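/- arXiv:0905.1489 — 2 statements merged into one kernel-verified Lean document; each statement's English description precedes it below -/
import Mathlib

section
/- Let f : (C₁, δ₁, β₁) → (C₂, δ₂, β₂) be a morphism of mixed complexes over κ. If the induced maps H^n(f) : H^n(C₁, δ₁) → H^n(C₂, δ₂) and H_n(f) : H_n(C₁, β₁) → H_n(C₂, β₂) are isomorphisms for every n, then the induced map ^−H^r_β(f) : ^−H^r_β(C₁) → ^−H^r_β(C₂) is an isomorphism for every r. -/
open LinearMap DirectSum

namespace CDGA

variable {κ : Type} [Field κ]

/-- Cast along an equality of indices. -/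
def fcast {ι : Type} {C : ι → Type} [∀ i, AddCommGroup (C i)] [∀ i, Module κ (C i)]
    {m n : ι} (h : m = n) : C m →ₗ[κ] C n := by subst h; exact LinearMap.id

section CohomologyDefs

variable {C : ℤ → Type} [∀ n, AddCommGroup (C n)] [∀ n, Module κ (C n)]

/-- Cocycles of a cochain complex. -/
def cocycles (d : ∀ n : ℤ, C n →ₗ[κ] C (n + 1)) (r : ℤ) : Submodule κ (C r) :=
  LinearMap.ker (d r)

/-- Coboundaries of a cochain complex. -/
def cobound (d : ∀ n : ℤ, C n →ₗ[κ] C (n + 1)) (r : ℤ) : Submodule κ (C r) :=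
  LinearMap.range ((fcast (show r - 1 + 1 = r by ring)).comp (d (r - 1)))

/-- Cohomology of a cochain complex in degree `r`. -/
abbrev cohomology (d : ∀ n : ℤ, C n →ₗ[κ] C (n + 1)) (r : ℤ) : Type :=
  ↥(cocycles d r) ⧸ (cobound d r).comap (cocycles d r).subtype

/-- Cycles of a chain complex (degree `-1` differential). -/
def bcycles (d : ∀ n : ℤ, C n →ₗ[κ] C (n - 1)) (r : ℤ) : Submodule κ (C r) :=
  LinearMap.ker (d r)

/-- Boundaries of a chain complex. -/
def bbound (d : ∀ n : ℤ, C n →ₗ[κ] C (n - 1)) (r : ℤ) : Submodule κ (C r) :=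
  LinearMap.range ((fcast (show r + 1 - 1 = r by ring)).comp (d (r + 1)))

/-- Homology of a chain complex in degree `r`. -/
abbrev homologyC (d : ∀ n : ℤ, C n →ₗ[κ] C (n - 1)) (r : ℤ) : Type :=
  ↥(bcycles d r) ⧸ (bbound d r).comap (bcycles d r).subtype

end CohomologyDefs

section InducedMaps

variable {C₁ C₂ : ℤ → Type}
  [∀ n, AddCommGroup (C₁ n)] [∀ n, Module κ (C₁ n)]
  [∀ n, AddCommGroup (C₂ n)] [∀ n, Module κ (C₂ n)]

open Classical in
/-- The map induced on cohomology by a linear map `g` from the degree-`a` part of the first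
complex to the degree-`b` part of the second complex.  (If `g` is not compatible with the
differentials, this is the junk value `0`.) -/
noncomputable def Hmap₂ (d₁ : ∀ n : ℤ, C₁ n →ₗ[κ] C₁ (n + 1)) (d₂ : ∀ n : ℤ, C₂ n →ₗ[κ] C₂ (n + 1))
    (a b : ℤ) (g : C₁ a →ₗ[κ] C₂ b) : cohomology d₁ a →ₗ[κ] cohomology d₂ b :=
  if h : cocycles d₁ a ≤ (cocycles d₂ b).comap g ∧ cobound d₁ a ≤ (cobound d₂ b).comap g then
    Submodule.mapQ _ _ (g.restrict fun x hx => h.1 hx)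
      (fun x hx => by
        have hg : g ↑x ∈ cobound d₂ b := h.2 hx
        simpa [Submodule.mem_comap, LinearMap.restrict_apply] using hg)
  else 0

open Classical in
/-- The map induced on homology by a linear map `g` from the degree-`a` part of the first
chain complex to the degree-`b` part of the second chain complex.  (Junk value `0` if `g` is
not compatible with the differentials.) -/
noncomputable def hMap₂ (d₁ : ∀ n : ℤ, C₁ n →ₗ[κ] C₁ (n - 1)) (d₂ : ∀ n : ℤ, C₂ n →ₗ[κ] C₂ (n - 1))
    (a b : ℤ) (g : C₁ a →ₗ[κ] C₂ b) : homologyC d₁ a →ₗ[κ] homologyC d₂ b :=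
  if h : bcycles d₁ a ≤ (bcycles d₂ b).comap g ∧ bbound d₁ a ≤ (bbound d₂ b).comap g then
    Submodule.mapQ _ _ (g.restrict fun x hx => h.1 hx)
      (fun x hx => by
        have hg : g ↑x ∈ bbound d₂ b := h.2 hx
        simpa [Submodule.mem_comap, LinearMap.restrict_apply] using hg)
  else 0

end InducedMaps

/-- A mixed complex over `κ`: non-negatively graded vector spaces with a degree `+1`
exterior differential `δ` and a degree `-1` interior differential `β` satisfying
`δδ = 0`, `ββ = 0` and `βδ + δβ = 0`. -/
structure Mixed (κ : Type) [Field κ] : Type 1 where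
  C : ℤ → Type
  [acg : ∀ n, AddCommGroup (C n)]
  [mod : ∀ n, Module κ (C n)]
  trivNeg : ∀ n : ℤ, n < 0 → Subsingleton (C n)
  δ : ∀ n : ℤ, C n →ₗ[κ] C (n + 1)
  β : ∀ n : ℤ, C n →ₗ[κ] C (n - 1)
  δδ : ∀ (n : ℤ) (x : C n), δ (n + 1) (δ n x) = 0
  ββ : ∀ (n : ℤ) (x : C n), β (n - 1) (β n x) = 0
  βδ : ∀ (n : ℤ) (x : C n),
    fcast (κ := κ) (show n + 1 - 1 = n by ring) (β (n + 1) (δ n x))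
      + fcast (κ := κ) (show n - 1 + 1 = n by ring) (δ (n - 1) (β n x)) = 0

attribute [instance] Mixed.acg Mixed.mod

/-- `^+C^r := ∏_{k ≥ 0} C^{r-2k}`. -/
abbrev plusC (M : Mixed κ) (r : ℤ) : Type := ∀ k : ℕ, M.C (r - 2 * (k : ℤ))

/-- `^-C^r := ∏_{k ≥ 0} C^{r+2k}`. -/
abbrev minusC (M : Mixed κ) (r : ℤ) : Type := ∀ k : ℕ, M.C (r + 2 * (k : ℤ))

/-- `𝕡C^r := ∏_{m ≡ r mod 2} C^m` (the components with `m < 0` are trivial). -/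
abbrev pprodC (M : Mixed κ) (r : ℤ) : Type := ∀ n : {m : ℤ // m % 2 = r % 2}, M.C n.1

/-- `PC^r := ⊕_{m ≡ r mod 2} C^m` (the components with `m < 0` are trivial). -/
abbrev pC (M : Mixed κ) (r : ℤ) : Type := ⨁ n : {m : ℤ // m % 2 = r % 2}, M.C n.1

/-- Components of the differential `^+D_β`. -/
def plusDComp (M : Mixed κ) (r : ℤ) : ∀ k : ℕ, plusC M r →ₗ[κ] M.C (r + 1 - 2 * (k : ℤ))
  | 0 =>
      (fcast (show r - 2 * ((0:ℕ) : ℤ) + 1 = r + 1 - 2 * ((0:ℕ) : ℤ) by push_cast; ring)).comp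
        ((M.δ (r - 2 * ((0:ℕ) : ℤ))).comp (LinearMap.proj 0))
  | (k + 1) =>
      (fcast (show r - 2 * ((k + 1 : ℕ) : ℤ) + 1 = r + 1 - 2 * ((k + 1 : ℕ) : ℤ) by push_cast; ring)).comp
        ((M.δ (r - 2 * ((k + 1 : ℕ) : ℤ))).comp (LinearMap.proj (k + 1)))
      + (fcast (show r - 2 * ((k : ℕ) : ℤ) - 1 = r + 1 - 2 * ((k + 1 : ℕ) : ℤ) by push_cast; ring)).comp
        ((M.β (r - 2 * ((k : ℕ) : ℤ))).comp (LinearMap.proj k))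

/-- The differential of the cochain complex `^+C_β`. -/
def plusD (M : Mixed κ) (r : ℤ) : plusC M r →ₗ[κ] plusC M (r + 1) :=
  LinearMap.pi (plusDComp M r)

/-- The differential of the chain complex `(^+C, ^+D^δ)`. -/
def plusDelta (M : Mixed κ) (r : ℤ) : plusC M r →ₗ[κ] plusC M (r - 1) :=
  LinearMap.pi fun k : ℕ =>
    (fcast (show r - 2 * ((k : ℕ) : ℤ) - 1 = r - 1 - 2 * ((k : ℕ) : ℤ) by ring)).comp
      ((M.β (r - 2 * ((k : ℕ) : ℤ))).comp (LinearMap.proj k))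
    + (fcast (show r - 2 * ((k + 1 : ℕ) : ℤ) + 1 = r - 1 - 2 * ((k : ℕ) : ℤ) by push_cast; ring)).comp
      ((M.δ (r - 2 * ((k + 1 : ℕ) : ℤ))).comp (LinearMap.proj (k + 1)))

/-- The differential of the cochain complex `^-C_β`. -/
def minusD (M : Mixed κ) (r : ℤ) : minusC M r →ₗ[κ] minusC M (r + 1) :=
  LinearMap.pi fun k : ℕ =>
    (fcast (show r + 2 * ((k + 1 : ℕ) : ℤ) - 1 = r + 1 + 2 * ((k : ℕ) : ℤ) by push_cast; ring)).comp
      ((M.β (r + 2 * ((k + 1 : ℕ) : ℤ))).comp (LinearMap.proj (k + 1)))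
    + (fcast (show r + 2 * ((k : ℕ) : ℤ) + 1 = r + 1 + 2 * ((k : ℕ) : ℤ) by ring)).comp
      ((M.δ (r + 2 * ((k : ℕ) : ℤ))).comp (LinearMap.proj k))

/-- The differential of the `2`-periodic cochain complex `𝕡C`. -/
def pprodD (M : Mixed κ) (r : ℤ) : pprodC M r →ₗ[κ] pprodC M (r + 1) :=
  LinearMap.pi fun n : {m : ℤ // m % 2 = (r + 1) % 2} =>
    (fcast (show n.1 - 1 + 1 = n.1 by ring)).comp
      ((M.δ (n.1 - 1)).comp
        (LinearMap.proj (⟨n.1 - 1, by have := n.2; omega⟩ : {m : ℤ // m % 2 = r % 2})))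
    + (fcast (show n.1 + 1 - 1 = n.1 by ring)).comp
      ((M.β (n.1 + 1)).comp
        (LinearMap.proj (⟨n.1 + 1, by have := n.2; omega⟩ : {m : ℤ // m % 2 = r % 2})))

/-- The differential of the `2`-periodic cochain complex `PC` (direct sum version). -/
noncomputable def pD (M : Mixed κ) (r : ℤ) : pC M r →ₗ[κ] pC M (r + 1) :=
  DirectSum.toModule κ {m : ℤ // m % 2 = r % 2} (pC M (r + 1)) fun n =>
    ((DirectSum.lof κ {m : ℤ // m % 2 = (r + 1) % 2} (fun m => M.C m.1)
        ⟨n.1 + 1, by have := n.2; omega⟩).comp (M.δ n.1))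
    + ((DirectSum.lof κ {m : ℤ // m % 2 = (r + 1) % 2} (fun m => M.C m.1)
        ⟨n.1 - 1, by have := n.2; omega⟩).comp (M.β n.1))

end CDGA

namespace CDGA

variable {κ : Type} [Field κ]

section MorphismInduced

variable {M₁ M₂ : Mixed κ}

/-- The map induced by a morphism of mixed complexes on `^+C`. -/
def plusMap (f : ∀ n : ℤ, M₁.C n →ₗ[κ] M₂.C n) (r : ℤ) : plusC M₁ r →ₗ[κ] plusC M₂ r :=
  LinearMap.pi fun k : ℕ => (f (r - 2 * (k : ℤ))).comp (LinearMap.proj k)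

/-- The map induced by a morphism of mixed complexes on `^-C`. -/
def minusMap (f : ∀ n : ℤ, M₁.C n →ₗ[κ] M₂.C n) (r : ℤ) : minusC M₁ r →ₗ[κ] minusC M₂ r :=
  LinearMap.pi fun k : ℕ => (f (r + 2 * (k : ℤ))).comp (LinearMap.proj k)

/-- The map induced by a morphism of mixed complexes on `𝕡C`. -/
def pprodMap (f : ∀ n : ℤ, M₁.C n →ₗ[κ] M₂.C n) (r : ℤ) : pprodC M₁ r →ₗ[κ] pprodC M₂ r :=
  LinearMap.pi fun n : {m : ℤ // m % 2 = r % 2} => (f n.1).comp (LinearMap.proj n)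

/-- The map induced by a morphism of mixed complexes on `PC`. -/
noncomputable def pMap (f : ∀ n : ℤ, M₁.C n →ₗ[κ] M₂.C n) (r : ℤ) : pC M₁ r →ₗ[κ] pC M₂ r :=
  DirectSum.toModule κ {m : ℤ // m % 2 = r % 2} (pC M₂ r) fun n =>
    (DirectSum.lof κ {m : ℤ // m % 2 = r % 2} (fun m => M₂.C m.1) n).comp (f n.1)

end MorphismInduced

/-- Components of the canonical inclusion `^+C^a → ^+C^{a+2} = ^+C^b`,
`(ω_a, ω_{a-2}, …) ↦ (0, ω_a, ω_{a-2}, …)`. -/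
def inclS2Comp (M : Mixed κ) (a b : ℤ) (h : a + 2 = b) :
    ∀ k : ℕ, plusC M a →ₗ[κ] M.C (b - 2 * (k : ℤ))
  | 0 => 0
  | (j + 1) =>
      (fcast (show a - 2 * ((j : ℕ) : ℤ) = b - 2 * ((j + 1 : ℕ) : ℤ) by push_cast; omega)).comp
        (LinearMap.proj j)

/-- The canonical inclusion `i : ^+C^a → ^+C^b` (for `b = a + 2`). -/
def inclS2 (M : Mixed κ) (a b : ℤ) (h : a + 2 = b) : plusC M a →ₗ[κ] plusC M b :=
  LinearMap.pi (inclS2Comp M a b h)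

/-- The projection `π : ^+C^r → C^r` onto the top component. -/
def topProj (M : Mixed κ) (r : ℤ) : plusC M r →ₗ[κ] M.C r :=
  (fcast (show r - 2 * ((0:ℕ) : ℤ) = r by push_cast; ring)).comp (LinearMap.proj 0)

/-- The canonical projection `^+C^a → ^+C^{a-2} = ^+C^b` dropping the top component. -/
def projS2 (M : Mixed κ) (a b : ℤ) (h : b + 2 = a) : plusC M a →ₗ[κ] plusC M b :=
  LinearMap.pi fun k : ℕ =>
    (fcast (show a - 2 * ((k + 1 : ℕ) : ℤ) = b - 2 * ((k : ℕ) : ℤ) by push_cast; omega)).comp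
      (LinearMap.proj (k + 1))

/-- The canonical inclusion `I : ^+C^{r-2} → 𝕡C^r` (placing the component of
degree `r - 2 - 2j` in degree `r - 2 - 2j`). -/
def inclPprod (M : Mixed κ) (r : ℤ) : plusC M (r - 2) →ₗ[κ] pprodC M r :=
  LinearMap.pi fun n : {m : ℤ // m % 2 = r % 2} =>
    if h : n.1 ≤ r - 2 then
      (fcast (show r - 2 - 2 * ((((r - 2 - n.1) / 2).toNat : ℕ) : ℤ) = n.1 by
          have := n.2; omega)).comp
        (LinearMap.proj (((r - 2 - n.1) / 2).toNat))
    else 0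

/-- The canonical projection `p : 𝕡C^r → ^-C^r` onto the components of degree `≥ r`. -/
def projMinus (M : Mixed κ) (r : ℤ) : pprodC M r →ₗ[κ] minusC M r :=
  LinearMap.pi fun j : ℕ =>
    LinearMap.proj (⟨r + 2 * (j : ℤ), by omega⟩ : {m : ℤ // m % 2 = r % 2})

/-- Reindexing (periodicity) isomorphism between the `2`-periodic complexes `PC^a` and
`PC^b` for `a ≡ b mod 2`. -/
noncomputable def reindexP (M : Mixed κ) (a b : ℤ) (h : a % 2 = b % 2) :
    pC M a →ₗ[κ] pC M b :=
  DirectSum.toModule κ {m : ℤ // m % 2 = a % 2} (pC M b) fun n =>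
    DirectSum.lof κ {m : ℤ // m % 2 = b % 2} (fun m => M.C m.1) ⟨n.1, by have := n.2; omega⟩

/-- The canonical map `^+C^m → PC^m` (the components of negative degree are trivial and
are sent to `0`). -/
noncomputable def inclPlusP (M : Mixed κ) (m : ℤ) : plusC M m →ₗ[κ] pC M m :=
  ∑ j ∈ Finset.range (m.toNat + 1),
    (DirectSum.lof κ {x : ℤ // x % 2 = m % 2} (fun x => M.C x.1)
        ⟨m - 2 * (j : ℤ), by omega⟩).comp
      (LinearMap.proj j)

section Psi

variable (M : Mixed κ) (Ψ : ℤ → ∀ n : ℤ, M.C n →ₗ[κ] M.C n)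

/-- The endomorphism `^+Ψ_k` of `^+C^r`: the component of degree `r - 2j` is scaled
by `k^{-j}`. -/
noncomputable def plusPsi (k : ℤ) (r : ℤ) : plusC M r →ₗ[κ] plusC M r :=
  LinearMap.pi fun j : ℕ =>
    (((k : κ)⁻¹) ^ (j : ℕ)) • ((Ψ k (r - 2 * (j : ℤ))).comp (LinearMap.proj j))

/-- The endomorphism `^-Ψ_k` of `^-C^r`: the component of degree `r + 2j` is scaled
by `k^j`. -/
noncomputable def minusPsi (k : ℤ) (r : ℤ) : minusC M r →ₗ[κ] minusC M r :=
  LinearMap.pi fun j : ℕ =>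
    ((k : κ) ^ (j : ℕ)) • ((Ψ k (r + 2 * (j : ℤ))).comp (LinearMap.proj j))

/-- The endomorphism `𝕡Ψ_k` of `𝕡C^r`: the component of degree `r + 2j` (`j ∈ ℤ`) is
scaled by `k^j`. -/
noncomputable def pprodPsi (k : ℤ) (r : ℤ) : pprodC M r →ₗ[κ] pprodC M r :=
  LinearMap.pi fun n : {m : ℤ // m % 2 = r % 2} =>
    ((k : κ) ^ ((n.1 - r) / 2)) • ((Ψ k n.1).comp (LinearMap.proj n))

end Psi

/-- The map `Φ((a_k)_k) = (a_k - S_k(a_{k+1}))_k` associated to an inverse system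
of vector spaces; its kernel is `lim` and its cokernel is `lim¹`. -/
def phiMap {A : ℕ → Type} [∀ i, AddCommGroup (A i)] [∀ i, Module κ (A i)]
    (S : ∀ i : ℕ, A (i + 1) →ₗ[κ] A i) : (∀ i, A i) →ₗ[κ] (∀ i, A i) :=
  LinearMap.pi fun i : ℕ => LinearMap.proj i - (S i).comp (LinearMap.proj (i + 1))

end CDGA

/-!
For a mixed complex `M` put `D = δ + β` on `∏ₘ Cᵐ`; then `^-C^r` is the quotient of (one parity
class of) this complex by the part in degrees `< r`. The mapping cone of `f`, with differential
`(x, y) ↦ (D x, f x - D y)`, is acyclic for two reasons. On elements bounded above, filter by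
degree from the top: the leading part of the differential is the cone of `f` on `(C, δ)`, which is
acyclic. On elements bounded below, filter from the bottom: the leading part is the cone of `f` on
`(C, β)`. Both filtrations are complete, so successive approximation applies. Since the complexes
are bounded below, the second case covers the whole cone. The quotient of the cone by its part in
low degrees is therefore acyclic as well, and it is the cone of `^-C₁ → ^-C₂`.
-/

namespace CDGA

section Filtration

variable {R A B : Type*} [Ring R] [AddCommGroup A] [Module R A] [AddCommGroup B] [Module R B]

/-- A decreasing filtration of a module which is separated and for which every sequence that is
Cauchy at the prescribed rate has a limit. -/
structure IsCompleteFiltration (F : ℕ → Submodule R A) : Prop where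
  iInf_eq_bot : ⨅ n, F n = ⊥
  exists_limit : ∀ w : ℕ → A, (∀ n, w (n + 1) - w n ∈ F n) → ∃ u, ∀ n, u - w n ∈ F n

theorem IsCompleteFiltration.prod {F : ℕ → Submodule R A} {G : ℕ → Submodule R B}
    (hF : IsCompleteFiltration F) (hG : IsCompleteFiltration G) :
    IsCompleteFiltration fun n => (F n).prod (G n) where
  iInf_eq_bot := by
    rw [← Submodule.prod_bot, ← hF.iInf_eq_bot, ← hG.iInf_eq_bot]
    ext z
    simp only [Submodule.mem_iInf, Submodule.mem_prod, forall_and]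
  exists_limit w hw := by
    obtain ⟨u, hu⟩ := hF.exists_limit (fun n => (w n).1) fun n => (hw n).1
    obtain ⟨v, hv⟩ := hG.exists_limit (fun n => (w n).2) fun n => (hw n).2
    exact ⟨(u, v), fun n => ⟨hu n, hv n⟩⟩

theorem le_map_of_le_map_sup_succ {F : ℕ → Submodule R A} {G : ℕ → Submodule R B}
    (D : B →ₗ[R] A) (hF : ⨅ n, F n = ⊥) (hG : IsCompleteFiltration G)
    (hD : ∀ n, (G n).map D ≤ F n) (happrox : ∀ n, F n ≤ (G n).map D ⊔ F (n + 1)) :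
    F 0 ≤ (G 0).map D := by
  intro z hz
  have correct : ∀ n w, ∃ g, z - D w ∈ F n → g ∈ G n ∧ z - D (w + g) ∈ F (n + 1) := by
    intro n w
    by_cases h : z - D w ∈ F n
    · obtain ⟨_, ⟨g, hg, rfl⟩, r, hr, hgr⟩ := Submodule.mem_sup.1 (happrox n h)
      refine ⟨g, fun _ => ⟨hg, ?_⟩⟩
      rwa [map_add, ← sub_sub, ← hgr, add_sub_cancel_left]
    · exact ⟨0, fun h' => absurd h' h⟩
  choose g hg using correct
  let w : ℕ → B := fun n => Nat.rec 0 (fun n u => u + g n u) n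
  have hw : ∀ n, z - D (w n) ∈ F n := by
    intro n
    induction n with
    | zero => simpa [w] using hz
    | succ n ih => exact (hg n _ ih).2
  obtain ⟨u, hu⟩ := hG.exists_limit w fun n => by
    simpa [w] using (hg n _ (hw n)).1
  refine ⟨u, by simpa [w] using hu 0, ?_⟩
  have hzu : z - D u ∈ ⨅ n, F n := by
    refine (Submodule.mem_iInf _).2 fun n => ?_
    rw [← sub_sub_sub_cancel_right z (D u) (D (w n)), ← map_sub]
    exact sub_mem (hw n) (hD n ⟨_, hu n, rfl⟩)
  rw [hF, Submodule.mem_bot, sub_eq_zero] at hzu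
  exact hzu.symm

end Filtration

section Vanishing

variable {R ι : Type*} {C : ι → Type*} [Ring R] [∀ i, AddCommGroup (C i)] [∀ i, Module R (C i)]

variable (R C) in
/-- The families whose components with index in `S` are zero. -/
def vanishingOn (S : Set ι) : Submodule R (∀ i, C i) := Submodule.pi S fun _ => ⊥

theorem mem_vanishingOn {S : Set ι} {x : ∀ i, C i} :
    x ∈ vanishingOn R C S ↔ ∀ i ∈ S, x i = 0 := Iff.rfl

theorem isCompleteFiltration_vanishingOn {S : ℕ → Set ι} (hS : Monotone S)
    (hcover : ∀ i, ∃ n, i ∈ S n) : IsCompleteFiltration fun n => vanishingOn R C (S n) where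
  iInf_eq_bot := by
    refine (Submodule.eq_bot_iff _).2 fun x hx => funext fun i => ?_
    obtain ⟨n, hn⟩ := hcover i
    exact (Submodule.mem_iInf _).1 hx n i hn
  exists_limit w hw := by
    choose p hp using hcover
    have stable : ∀ i m n, i ∈ S m → m ≤ n → w n i = w m i := by
      intro i m n hm hmn
      induction n, hmn using Nat.le_induction with
      | base => rfl
      | succ n hmn ih => rw [← ih]; exact sub_eq_zero.1 (hw n i (hS hmn hm))
    refine ⟨fun i => w (p i) i, fun n i hi => sub_eq_zero.2 ?_⟩
    rcases le_total (p i) n with h | h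
    · exact (stable i _ _ (hp i) h).symm
    · exact stable i _ _ hi h

end Vanishing

section Graded

variable {R : Type*} [Ring R] {C C₁ C₂ : ℤ → Type*}
  [∀ n, AddCommGroup (C n)] [∀ n, Module R (C n)]
  [∀ n, AddCommGroup (C₁ n)] [∀ n, Module R (C₁ n)]
  [∀ n, AddCommGroup (C₂ n)] [∀ n, Module R (C₂ n)]

/-- An endomorphism of `∏ₘ Cᵐ` is homogeneous of degree `e` if the component of `T x` in degree
`i + e` depends only on the component of `x` in degree `i`. The target degree is a separate variable
so that no casts between `C (i + e)` and `C j` are needed. -/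
def IsHomogeneous (e : ℤ) (T : (∀ m, C m) →ₗ[R] ∀ m, C m) : Prop :=
  ∀ ⦃x i j⦄, i + e = j → x i = 0 → T x j = 0

theorem IsHomogeneous.congr {e : ℤ} {T : (∀ m, C m) →ₗ[R] ∀ m, C m} (hT : IsHomogeneous e T)
    {x y : ∀ m, C m} {i j : ℤ} (hij : i + e = j) (hxy : x i = y i) : T x j = T y j := by
  have h : T (x - y) j = 0 := hT hij (sub_eq_zero.2 hxy)
  rwa [map_sub, Pi.sub_apply, sub_eq_zero] at h

/-- `d` is the part of degree `e` of the endomorphism `D`, whose only other part has degree `-e`. -/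
structure IsLeadingPart (e : ℤ) (d D : (∀ m, C m) →ₗ[R] ∀ m, C m) : Prop where
  homogeneous : IsHomogeneous e d
  sub_homogeneous : IsHomogeneous (-e) (D - d)

namespace IsLeadingPart

variable {e : ℤ} {d D : (∀ m, C m) →ₗ[R] ∀ m, C m} {x : ∀ m, C m} {m : ℤ}

theorem apply_eq (h : IsLeadingPart e d D) (hx : x (m + e) = 0) : D x m = d x m :=
  sub_eq_zero.1 (h.sub_homogeneous (by omega) hx)

theorem apply_eq_zero (h : IsLeadingPart e d D) (hx : x (m - e) = 0) (hx' : x (m + e) = 0) :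
    D x m = 0 :=
  (h.apply_eq hx').trans (h.homogeneous (by omega) hx)

end IsLeadingPart

/-- `f` induces a bijection on the homology in degree `a` of two graded modules with differentials
`T₁`, `T₂` of degree `e`, expressed through families instead of homogeneous elements. -/
structure IsQuasiIsoAt (e : ℤ) (T₁ : (∀ m, C₁ m) →ₗ[R] ∀ m, C₁ m)
    (T₂ : (∀ m, C₂ m) →ₗ[R] ∀ m, C₂ m) (f : ∀ m, C₁ m →ₗ[R] C₂ m) (a : ℤ) : Prop where
  injective : ∀ x y, T₁ x (a + e) = 0 → f a (x a) = T₂ y a → ∃ x', T₁ x' a = x a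
  surjective : ∀ y, T₂ y (a + e) = 0 → ∃ x y', T₁ x (a + e) = 0 ∧ y a - f a (x a) = T₂ y' a

section Cone

variable {e : ℤ} {f : ∀ m, C₁ m →ₗ[R] C₂ m}
  {d₁ D₁ : (∀ m, C₁ m) →ₗ[R] ∀ m, C₁ m} {d₂ D₂ : (∀ m, C₂ m) →ₗ[R] ∀ m, C₂ m}

theorem exists_cone_primitive (hqi : ∀ a, IsQuasiIsoAt e d₁ d₂ f a)
    (hf : ∀ x, d₂ (piMap f x) = piMap f (d₁ x))
    {x : ∀ m, C₁ m} {y : ∀ m, C₂ m} {m : ℤ} (hx : d₁ x (m + e) = 0) (hxy : f m (x m) = d₂ y m) :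
    ∃ x' y', d₁ x' m = x m ∧ f (m - e) (x' (m - e)) - d₂ y' (m - e) = y (m - e) := by
  obtain ⟨x₀, hx₀⟩ := (hqi m).injective x y hx hxy
  have hcycle : d₂ (y - piMap f x₀) (m - e + e) = 0 := by
    rw [sub_add_cancel, map_sub, hf, Pi.sub_apply, coe_piMap, Pi.map_apply, hx₀, hxy, sub_self]
  obtain ⟨c, y', hc, hy'⟩ := (hqi (m - e)).surjective _ hcycle
  rw [sub_add_cancel] at hc
  refine ⟨x₀ + c, -y', ?_, ?_⟩
  · rw [map_add, Pi.add_apply, hx₀, hc, add_zero]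
  · rw [map_neg, Pi.neg_apply, ← hy']
    simp only [Pi.add_apply, Pi.sub_apply, coe_piMap, Pi.map_apply, map_add]
    abel

/-- The differential of the mapping cone of `f`, on the product of the total modules. -/
def coneD (D₁ : (∀ m, C₁ m) →ₗ[R] ∀ m, C₁ m) (D₂ : (∀ m, C₂ m) →ₗ[R] ∀ m, C₂ m)
    (f : ∀ m, C₁ m →ₗ[R] C₂ m) : Module.End R ((∀ m, C₁ m) × ∀ m, C₂ m) :=
  (D₁ ∘ₗ fst R _ _).prod (piMap f ∘ₗ fst R _ _ - D₂ ∘ₗ snd R _ _)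

theorem coneD_apply (z : (∀ m, C₁ m) × ∀ m, C₂ m) :
    coneD D₁ D₂ f z = (D₁ z.1, piMap f z.1 - D₂ z.2) := rfl

theorem coneD_coneD (hD₁ : ∀ x, D₁ (D₁ x) = 0) (hD₂ : ∀ y, D₂ (D₂ y) = 0)
    (hf : ∀ x, D₂ (piMap f x) = piMap f (D₁ x)) (z : (∀ m, C₁ m) × ∀ m, C₂ m) :
    coneD D₁ D₂ f (coneD D₁ D₂ f z) = 0 := by
  simp only [coneD_apply, hD₁, map_sub, hD₂, hf, sub_zero, sub_self, Prod.mk_zero_zero]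

variable (R C₁ C₂) in
/-- The part of the cone of weight at most `N`, where `C₁ m` has weight `e * m` and `C₂ m` has
weight `e * m + 1`, so that both the degree `e` part of the differential and `f` raise the weight
by `1`. -/
def coneFiltration (e N : ℤ) : Submodule R ((∀ m, C₁ m) × ∀ m, C₂ m) :=
  (vanishingOn R C₁ {m | N < e * m}).prod (vanishingOn R C₂ {m | N < e * m + 1})

theorem mem_coneFiltration {N : ℤ} {z : (∀ m, C₁ m) × ∀ m, C₂ m} :
    z ∈ coneFiltration R C₁ C₂ e N ↔
      (∀ m, N < e * m → z.1 m = 0) ∧ ∀ m, N < e * m + 1 → z.2 m = 0 := Iff.rfl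

theorem isCompleteFiltration_coneFiltration (e N : ℤ) :
    IsCompleteFiltration fun n : ℕ => coneFiltration R C₁ C₂ e (N - n) := by
  refine .prod (isCompleteFiltration_vanishingOn (fun a b hab m hm => ?_) fun m =>
    ⟨(N - e * m + 1).toNat, ?_⟩) (isCompleteFiltration_vanishingOn (fun a b hab m hm => ?_) fun m =>
    ⟨(N - e * m + 1).toNat, ?_⟩)
  all_goals simp only [Set.mem_ofPred_eq] at *; omega

theorem coneD_mem_coneFiltration (he : IsUnit e) (h₁ : IsLeadingPart e d₁ D₁)
    (h₂ : IsLeadingPart e d₂ D₂) {N : ℤ} {z : (∀ m, C₁ m) × ∀ m, C₂ m}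
    (hz : z ∈ coneFiltration R C₁ C₂ e (N - 1)) :
    coneD D₁ D₂ f z ∈ coneFiltration R C₁ C₂ e N := by
  obtain ⟨hz₁, hz₂⟩ := mem_coneFiltration.1 hz
  refine mem_coneFiltration.2 ⟨fun m hm => ?_, fun m hm => ?_⟩
  · rcases Int.isUnit_iff.1 he with rfl | rfl <;>
      exact h₁.apply_eq_zero (hz₁ _ (by omega)) (hz₁ _ (by omega))
  · have hD₂ : D₂ z.2 m = 0 := by
      rcases Int.isUnit_iff.1 he with rfl | rfl <;>
        exact h₂.apply_eq_zero (hz₂ _ (by omega)) (hz₂ _ (by omega))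
    simp only [coneD_apply, Pi.sub_apply, coe_piMap, Pi.map_apply, hz₁ m (by omega), map_zero,
      hD₂, sub_zero]

theorem mem_coneFiltration_pred (he : IsUnit e) {m : ℤ} {z : (∀ m, C₁ m) × ∀ m, C₂ m}
    (hz : z ∈ coneFiltration R C₁ C₂ e (e * m)) (hz₁ : z.1 m = 0) (hz₂ : z.2 (m - e) = 0) :
    z ∈ coneFiltration R C₁ C₂ e (e * m - 1) := by
  obtain ⟨hlt₁, hlt₂⟩ := mem_coneFiltration.1 hz
  refine mem_coneFiltration.2 ⟨fun j hj => ?_, fun j hj => ?_⟩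
  · rcases eq_or_ne j m with rfl | hjm
    · exact hz₁
    · exact hlt₁ j (by rcases Int.isUnit_iff.1 he with rfl | rfl <;> omega)
  · rcases eq_or_ne j (m - e) with rfl | hjm
    · exact hz₂
    · exact hlt₂ j (by rcases Int.isUnit_iff.1 he with rfl | rfl <;> omega)

theorem single_mem_coneFiltration (he : IsUnit e) (m : ℤ) (a : C₁ (m - e)) (b : C₂ (m - e - e)) :
    (Pi.single (m - e) a, Pi.single (m - e - e) b) ∈ coneFiltration R C₁ C₂ e (e * m - 1) := by
  refine mem_coneFiltration.2 ⟨fun j hj => Pi.single_eq_of_ne ?_ _,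
    fun j hj => Pi.single_eq_of_ne ?_ _⟩
  all_goals rcases Int.isUnit_iff.1 he with rfl | rfl <;> omega

theorem exists_sub_coneD_mem_coneFiltration_pred (he : IsUnit e) (h₁ : IsLeadingPart e d₁ D₁)
    (h₂ : IsLeadingPart e d₂ D₂) (hf : ∀ x, d₂ (piMap f x) = piMap f (d₁ x))
    (hqi : ∀ a, IsQuasiIsoAt e d₁ d₂ f a) {m : ℤ} {z : (∀ m, C₁ m) × ∀ m, C₂ m}
    (hz : z ∈ coneFiltration R C₁ C₂ e (e * m)) (hDz : coneD D₁ D₂ f z = 0) :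
    ∃ w ∈ coneFiltration R C₁ C₂ e (e * m - 1),
      z - coneD D₁ D₂ f w ∈ coneFiltration R C₁ C₂ e (e * m - 1) := by
  obtain ⟨hz₁, hz₂⟩ := mem_coneFiltration.1 hz
  rw [coneD_apply, Prod.mk_eq_zero] at hDz
  have hvan₁ : z.1 (m + e + e) = 0 :=
    hz₁ _ (by rcases Int.isUnit_iff.1 he with rfl | rfl <;> omega)
  have hvan₂ : z.2 (m + e) = 0 :=
    hz₂ _ (by rcases Int.isUnit_iff.1 he with rfl | rfl <;> omega)
  have htop₁ : d₁ z.1 (m + e) = 0 := by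
    rw [← h₁.apply_eq hvan₁, hDz.1, Pi.zero_apply]
  have htop₂ : f m (z.1 m) = d₂ z.2 m := by
    rw [← h₂.apply_eq hvan₂]
    exact sub_eq_zero.1 (congrFun hDz.2 m)
  obtain ⟨x, y, hx, hxy⟩ := exists_cone_primitive hqi hf htop₁ htop₂
  have hw := single_mem_coneFiltration (R := R) he m (x (m - e)) (y (m - e - e))
  set u : ∀ m, C₁ m := Pi.single (m - e) (x (m - e)) with hu
  set v : ∀ m, C₂ m := Pi.single (m - e - e) (y (m - e - e)) with hv
  obtain ⟨hw₁, hw₂⟩ := mem_coneFiltration.1 hw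
  have hDu : D₁ u m = z.1 m := by
    rw [h₁.apply_eq (hw₁ _ (by rcases Int.isUnit_iff.1 he with rfl | rfl <;> omega)), ← hx]
    exact h₁.homogeneous.congr (sub_add_cancel m e) (Pi.single_eq_same _ _)
  have hDv : D₂ v (m - e) = d₂ y (m - e) := by
    rw [h₂.apply_eq (hw₂ _ (by rcases Int.isUnit_iff.1 he with rfl | rfl <;> omega))]
    exact h₂.homogeneous.congr (sub_add_cancel _ e) (Pi.single_eq_same _ _)
  refine ⟨(u, v), hw, mem_coneFiltration_pred he
    (sub_mem hz (coneD_mem_coneFiltration he h₁ h₂ hw)) ?_ ?_⟩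
  · exact sub_eq_zero.2 hDu.symm
  · simp only [coneD_apply, Prod.snd_sub, Pi.sub_apply, coe_piMap, Pi.map_apply, hDv, hu,
      Pi.single_eq_same, hxy, sub_self]

theorem exists_coneD_eq_of_mem_coneFiltration (he : IsUnit e) (h₁ : IsLeadingPart e d₁ D₁)
    (h₂ : IsLeadingPart e d₂ D₂) (hf : ∀ x, d₂ (piMap f x) = piMap f (d₁ x))
    (hqi : ∀ a, IsQuasiIsoAt e d₁ d₂ f a)
    (hDD : ∀ z, coneD D₁ D₂ f (coneD D₁ D₂ f z) = 0) {N : ℤ} {z : (∀ m, C₁ m) × ∀ m, C₂ m}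
    (hz : z ∈ coneFiltration R C₁ C₂ e N) (hDz : coneD D₁ D₂ f z = 0) :
    ∃ w ∈ coneFiltration R C₁ C₂ e (N - 1), coneD D₁ D₂ f w = z := by
  let K : Submodule R ((∀ m, C₁ m) × ∀ m, C₂ m) := ker (coneD D₁ D₂ f)
  have hsep : ⨅ n : ℕ, coneFiltration R C₁ C₂ e (N - n) ⊓ K = ⊥ := by
    rw [← iInf_inf, (isCompleteFiltration_coneFiltration e N).iInf_eq_bot, bot_inf_eq]
  have hle := le_map_of_le_map_sup_succ (coneD D₁ D₂ f) hsep
    (isCompleteFiltration_coneFiltration e (N - 1)) ?_ ?_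
  · obtain ⟨w, hw, hwz⟩ := hle ⟨by simpa using hz, hDz⟩
    exact ⟨w, by simpa using hw, hwz⟩
  · rintro n _ ⟨w, hw, rfl⟩
    exact ⟨coneD_mem_coneFiltration he h₁ h₂ (by rwa [sub_right_comm]), hDD w⟩
  · rintro n z ⟨hz, hDz⟩
    obtain ⟨m, hm⟩ : e ∣ N - n := he.dvd
    rw [hm] at hz
    obtain ⟨w, hw, hzw⟩ := exists_sub_coneD_mem_coneFiltration_pred he h₁ h₂ hf hqi hz hDz
    have hpred : e * m - 1 = N - (n + 1 : ℕ) := by push_cast; omega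
    refine Submodule.mem_sup.2 ⟨_, ⟨w, ?_, rfl⟩, z - coneD D₁ D₂ f w, ⟨hpred ▸ hzw, ?_⟩,
      add_sub_cancel _ _⟩
    · rwa [SetLike.mem_coe, sub_right_comm, hm]
    · rw [SetLike.mem_coe, LinearMap.mem_ker, map_sub, hDz, hDD, sub_zero]

end Cone

end Graded
section Homology

variable {R : Type*} [Ring R]

theorem bijective_mapQ_iff {V W : Type*} [AddCommGroup V] [Module R V] [AddCommGroup W]
    [Module R W] {p : Submodule R V} {q : Submodule R W} {f : V →ₗ[R] W} (h : p ≤ q.comap f) :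
    Function.Bijective (p.mapQ q f h) ↔
      (∀ x, f x ∈ q → x ∈ p) ∧ ∀ y, ∃ x, y - f x ∈ q := by
  refine and_congr ?_ ?_
  · rw [injective_iff_map_eq_zero, p.mkQ_surjective.forall]
    simp only [Submodule.mkQ_apply, Submodule.mapQ_apply, Submodule.Quotient.mk_eq_zero]
  · rw [Function.Surjective, q.mkQ_surjective.forall]
    refine forall_congr' fun y => p.mkQ_surjective.exists.trans <| exists_congr fun x => ?_
    rw [eq_comm, Submodule.mkQ_apply, Submodule.mkQ_apply, Submodule.mapQ_apply,
      Submodule.Quotient.eq]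

variable {C C₁ C₂ : ℤ → Type*}
  [∀ n, AddCommGroup (C n)] [∀ n, Module R (C n)]
  [∀ n, AddCommGroup (C₁ n)] [∀ n, Module R (C₁ n)]
  [∀ n, AddCommGroup (C₂ n)] [∀ n, Module R (C₂ n)]

/-- `Z` and `B` are the cycles and the boundaries in degree `a` of the graded module with
differential `T` of degree `e`. -/
structure IsCyclesBoundaries (e : ℤ) (T : (∀ m, C m) →ₗ[R] ∀ m, C m) {a : ℤ}
    (Z B : Submodule R (C a)) : Prop where
  mem_cycles_iff : ∀ x : ∀ m, C m, x a ∈ Z ↔ T x (a + e) = 0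
  mem_boundaries_iff : ∀ v, v ∈ B ↔ ∃ w, T w a = v

namespace IsCyclesBoundaries

variable {e a : ℤ} {f : ∀ m, C₁ m →ₗ[R] C₂ m} {T₁ : (∀ m, C₁ m) →ₗ[R] ∀ m, C₁ m}
  {T₂ : (∀ m, C₂ m) →ₗ[R] ∀ m, C₂ m} {Z₁ B₁ : Submodule R (C₁ a)} {Z₂ B₂ : Submodule R (C₂ a)}

theorem le_comap (h₁ : IsCyclesBoundaries e T₁ Z₁ B₁) (h₂ : IsCyclesBoundaries e T₂ Z₂ B₂)
    (hf : ∀ x, T₂ (piMap f x) = piMap f (T₁ x)) :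
    Z₁ ≤ Z₂.comap (f a) ∧ B₁ ≤ B₂.comap (f a) := by
  constructor
  · refine (Function.surjective_eval a).forall.2 fun x hx => (h₂.mem_cycles_iff (piMap f x)).2 ?_
    rw [hf, coe_piMap, Pi.map_apply, (h₁.mem_cycles_iff x).1 hx, map_zero]
  · intro v hv
    obtain ⟨w, rfl⟩ := (h₁.mem_boundaries_iff v).1 hv
    exact (h₂.mem_boundaries_iff _).2 ⟨piMap f w, congrFun (hf w) a⟩

theorem bijective_mapQ_restrict_iff (h₁ : IsCyclesBoundaries e T₁ Z₁ B₁)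
    (h₂ : IsCyclesBoundaries e T₂ Z₂ B₂) (hZ : ∀ x ∈ Z₁, f a x ∈ Z₂)
    (hB : B₁.comap Z₁.subtype ≤ (B₂.comap Z₂.subtype).comap ((f a).restrict hZ)) :
    Function.Bijective (Submodule.mapQ _ _ ((f a).restrict hZ) hB) ↔
      IsQuasiIsoAt e T₁ T₂ f a := by
  rw [bijective_mapQ_iff]
  constructor
  · rintro ⟨hinj, hsurj⟩
    refine ⟨fun x y hx hxy => ?_, fun y hy => ?_⟩
    · exact (h₁.mem_boundaries_iff _).1 <| hinj ⟨x a, (h₁.mem_cycles_iff x).2 hx⟩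
        ((h₂.mem_boundaries_iff _).2 ⟨y, hxy.symm⟩)
    · obtain ⟨⟨c, hc⟩, hyc⟩ := hsurj ⟨y a, (h₂.mem_cycles_iff y).2 hy⟩
      obtain ⟨x, rfl⟩ := Function.surjective_eval a c
      obtain ⟨y', hy'⟩ := (h₂.mem_boundaries_iff _).1 hyc
      exact ⟨x, y', (h₁.mem_cycles_iff x).1 hc, hy'.symm⟩
  · rintro ⟨hinj, hsurj⟩
    refine ⟨?_, ?_⟩
    · rintro ⟨c, hc⟩ hfc
      obtain ⟨x, rfl⟩ := Function.surjective_eval a c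
      obtain ⟨y, hy⟩ := (h₂.mem_boundaries_iff _).1 hfc
      exact (h₁.mem_boundaries_iff _).2 (hinj x y ((h₁.mem_cycles_iff x).1 hc) hy.symm)
    · rintro ⟨b, hb⟩
      obtain ⟨y, rfl⟩ := Function.surjective_eval a b
      obtain ⟨x, y', hx, hy'⟩ := hsurj y ((h₂.mem_cycles_iff y).1 hb)
      exact ⟨⟨x a, (h₁.mem_cycles_iff x).2 hx⟩, (h₂.mem_boundaries_iff _).2 ⟨y', hy'.symm⟩⟩

end IsCyclesBoundaries

end Homology

section Total

variable {κ : Type} [Field κ] {C C₁ C₂ : ℤ → Type}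
  [∀ n, AddCommGroup (C n)] [∀ n, Module κ (C n)]
  [∀ n, AddCommGroup (C₁ n)] [∀ n, Module κ (C₁ n)]
  [∀ n, AddCommGroup (C₂ n)] [∀ n, Module κ (C₂ n)]

section Up

variable {d : ∀ n : ℤ, C n →ₗ[κ] C (n + 1)} {d₁ : ∀ n : ℤ, C₁ n →ₗ[κ] C₁ (n + 1)}
  {d₂ : ∀ n : ℤ, C₂ n →ₗ[κ] C₂ (n + 1)} {f : ∀ n, C₁ n →ₗ[κ] C₂ n}

/-- The endomorphism of `∏ₘ Cᵐ` assembled from the components of a differential of degree `1`. -/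
def total (d : ∀ n : ℤ, C n →ₗ[κ] C (n + 1)) : (∀ m, C m) →ₗ[κ] ∀ m, C m :=
  LinearMap.pi fun m => fcast (sub_add_cancel m 1) ∘ₗ d (m - 1) ∘ₗ proj (m - 1)

theorem total_apply (d : ∀ n : ℤ, C n →ₗ[κ] C (n + 1)) (x : ∀ m, C m) {i j : ℤ} (h : i + 1 = j) :
    total d x j = fcast (κ := κ) h (d i (x i)) := by
  obtain rfl : i = j - 1 := by omega
  rfl

theorem total_apply_add_one (d : ∀ n : ℤ, C n →ₗ[κ] C (n + 1)) (x : ∀ m, C m) (n : ℤ) :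
    total d x (n + 1) = d n (x n) :=
  total_apply d x rfl

theorem isHomogeneous_total (d : ∀ n : ℤ, C n →ₗ[κ] C (n + 1)) : IsHomogeneous 1 (total d) := by
  intro x i j h hx
  rw [total_apply d x h, hx, map_zero, map_zero]

theorem total_total (hd : ∀ n x, d (n + 1) (d n x) = 0) (x : ∀ m, C m) :
    total d (total d x) = 0 := by
  funext m
  obtain ⟨n, rfl⟩ : ∃ n, m = n + 1 + 1 := ⟨m - 1 - 1, by omega⟩
  rw [total_apply_add_one, total_apply_add_one, hd, Pi.zero_apply]

theorem total_piMap (hf : ∀ n x, d₂ n (f n x) = f (n + 1) (d₁ n x)) (x : ∀ m, C₁ m) :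
    total d₂ (piMap f x) = piMap f (total d₁ x) := by
  funext m
  obtain ⟨n, rfl⟩ : ∃ n, m = n + 1 := ⟨m - 1, by omega⟩
  simp only [coe_piMap, Pi.map_apply, total_apply_add_one, hf]

theorem isCyclesBoundaries_total (d : ∀ n : ℤ, C n →ₗ[κ] C (n + 1)) (a : ℤ) :
    IsCyclesBoundaries 1 (total d) (cocycles d a) (cobound d a) where
  mem_cycles_iff x := by rw [total_apply_add_one, cocycles, LinearMap.mem_ker]
  mem_boundaries_iff v := (Function.surjective_eval (a - 1)).exists

theorem bijective_Hmap₂_iff (hf : ∀ n x, d₂ n (f n x) = f (n + 1) (d₁ n x)) (a : ℤ) :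
    Function.Bijective (Hmap₂ d₁ d₂ a a (f a)) ↔
      IsQuasiIsoAt 1 (total d₁) (total d₂) f a := by
  have h₁ := isCyclesBoundaries_total d₁ a
  have h₂ := isCyclesBoundaries_total d₂ a
  rw [Hmap₂, dif_pos (h₁.le_comap h₂ (total_piMap hf))]
  exact h₁.bijective_mapQ_restrict_iff h₂ _ _

end Up

section Down

variable {d : ∀ n : ℤ, C n →ₗ[κ] C (n - 1)} {d₁ : ∀ n : ℤ, C₁ n →ₗ[κ] C₁ (n - 1)}
  {d₂ : ∀ n : ℤ, C₂ n →ₗ[κ] C₂ (n - 1)} {f : ∀ n, C₁ n →ₗ[κ] C₂ n}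

/-- The endomorphism of `∏ₘ Cᵐ` assembled from the components of a differential of degree `-1`. -/
def totalDown (d : ∀ n : ℤ, C n →ₗ[κ] C (n - 1)) : (∀ m, C m) →ₗ[κ] ∀ m, C m :=
  LinearMap.pi fun m => fcast (add_sub_cancel_right m 1) ∘ₗ d (m + 1) ∘ₗ proj (m + 1)

theorem totalDown_apply (d : ∀ n : ℤ, C n →ₗ[κ] C (n - 1)) (x : ∀ m, C m) {i j : ℤ}
    (h : i - 1 = j) : totalDown d x j = fcast (κ := κ) h (d i (x i)) := by
  obtain rfl : i = j + 1 := by omega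
  rfl

theorem totalDown_apply_sub_one (d : ∀ n : ℤ, C n →ₗ[κ] C (n - 1)) (x : ∀ m, C m) (n : ℤ) :
    totalDown d x (n - 1) = d n (x n) :=
  totalDown_apply d x rfl

theorem isHomogeneous_totalDown (d : ∀ n : ℤ, C n →ₗ[κ] C (n - 1)) :
    IsHomogeneous (-1) (totalDown d) := by
  intro x i j h hx
  rw [totalDown_apply d x (i := i) (by omega), hx, map_zero, map_zero]

theorem totalDown_totalDown (hd : ∀ n x, d (n - 1) (d n x) = 0) (x : ∀ m, C m) :
    totalDown d (totalDown d x) = 0 := by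
  funext m
  obtain ⟨n, rfl⟩ : ∃ n, m = n - 1 - 1 := ⟨m + 1 + 1, by omega⟩
  rw [totalDown_apply_sub_one, totalDown_apply_sub_one, hd, Pi.zero_apply]

theorem totalDown_piMap (hf : ∀ n x, d₂ n (f n x) = f (n - 1) (d₁ n x)) (x : ∀ m, C₁ m) :
    totalDown d₂ (piMap f x) = piMap f (totalDown d₁ x) := by
  funext m
  obtain ⟨n, rfl⟩ : ∃ n, m = n - 1 := ⟨m + 1, by omega⟩
  simp only [coe_piMap, Pi.map_apply, totalDown_apply_sub_one, hf]

theorem isCyclesBoundaries_totalDown (d : ∀ n : ℤ, C n →ₗ[κ] C (n - 1)) (a : ℤ) :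
    IsCyclesBoundaries (-1) (totalDown d) (bcycles d a) (bbound d a) where
  mem_cycles_iff x := by
    rw [← sub_eq_add_neg, totalDown_apply_sub_one, bcycles, LinearMap.mem_ker]
  mem_boundaries_iff v := (Function.surjective_eval (a + 1)).exists

theorem bijective_hMap₂_iff (hf : ∀ n x, d₂ n (f n x) = f (n - 1) (d₁ n x)) (a : ℤ) :
    Function.Bijective (hMap₂ d₁ d₂ a a (f a)) ↔
      IsQuasiIsoAt (-1) (totalDown d₁) (totalDown d₂) f a := by
  have h₁ := isCyclesBoundaries_totalDown d₁ a
  have h₂ := isCyclesBoundaries_totalDown d₂ a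
  rw [hMap₂, dif_pos (h₁.le_comap h₂ (totalDown_piMap hf))]
  exact h₁.bijective_mapQ_restrict_iff h₂ _ _

end Down

end Total

section MixedComplex

variable {κ : Type} [Field κ] {M M₁ M₂ : Mixed κ}

namespace Mixed

/-- The differential `δ + β` on the product of all components of a mixed complex. -/
def totalD (M : Mixed κ) : (∀ m, M.C m) →ₗ[κ] ∀ m, M.C m := total M.δ + totalDown M.β

theorem totalDown_total_add (x : ∀ m, M.C m) :
    totalDown M.β (total M.δ x) + total M.δ (totalDown M.β x) = 0 := by
  funext m
  rw [Pi.add_apply, totalDown_apply _ _ (add_sub_cancel_right m 1), total_apply_add_one,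
    total_apply _ _ (sub_add_cancel m 1), totalDown_apply_sub_one]
  exact M.βδ m (x m)

theorem totalD_totalD (x : ∀ m, M.C m) : M.totalD (M.totalD x) = 0 := by
  simp only [totalD, LinearMap.add_apply, map_add, total_total M.δδ, totalDown_totalDown M.ββ,
    zero_add, add_zero, totalDown_total_add]

theorem isLeadingPart_total (M : Mixed κ) : IsLeadingPart 1 (total M.δ) M.totalD where
  homogeneous := isHomogeneous_total M.δ
  sub_homogeneous := by rw [totalD, add_sub_cancel_left]; exact isHomogeneous_totalDown M.β

theorem isLeadingPart_totalDown (M : Mixed κ) : IsLeadingPart (-1) (totalDown M.β) M.totalD where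
  homogeneous := isHomogeneous_totalDown M.β
  sub_homogeneous := by
    rw [totalD, add_sub_cancel_right, neg_neg]; exact isHomogeneous_total M.δ

theorem totalD_mem_vanishingOn_odd {r : ℤ} {x : ∀ m, M.C m}
    (hx : x ∈ vanishingOn κ M.C {m | Odd (m - r)}) :
    M.totalD x ∈ vanishingOn κ M.C {m | Odd (m - (r + 1))} := by
  rintro m ⟨j, hj⟩
  exact M.isLeadingPart_total.apply_eq_zero (hx _ ⟨j, by omega⟩) (hx _ ⟨j + 1, by omega⟩)

/-- The projection of the product of all components of `M` onto `^-C^r`. -/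
def toMinus (M : Mixed κ) (r : ℤ) : (∀ m, M.C m) →ₗ[κ] minusC M r :=
  LinearMap.pi fun k => proj (r + 2 * (k : ℤ))

theorem exists_toMinus_eq {r : ℤ} (ω : minusC M r) :
    ∃ x ∈ vanishingOn κ M.C {m | Odd (m - r)}, M.toMinus r x = ω := by
  have extend : ∀ m, ∃ v : M.C m,
      (∀ (k : ℕ) (h : r + 2 * (k : ℤ) = m), fcast (κ := κ) h (ω k) = v) ∧
      ((∀ k : ℕ, r + 2 * (k : ℤ) ≠ m) → v = 0) := by
    intro m
    by_cases hm : ∃ k : ℕ, r + 2 * (k : ℤ) = m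
    · obtain ⟨k, rfl⟩ := hm
      refine ⟨ω k, fun k' h => ?_, fun h => absurd rfl (h k)⟩
      obtain rfl : k' = k := by omega
      rfl
    · exact ⟨0, fun k h => absurd ⟨k, h⟩ hm, fun _ => rfl⟩
  choose x hx hx₀ using extend
  refine ⟨x, ?_, funext fun k => (hx _ k rfl).symm⟩
  rintro m ⟨j, hj⟩
  exact hx₀ m fun k => by omega

theorem eq_zero_of_toMinus_eq_zero {r m : ℤ} {x : ∀ m, M.C m}
    (hx : x ∈ vanishingOn κ M.C {m | Odd (m - r)}) (h : M.toMinus r x = 0) (hm : r ≤ m + 1) :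
    x m = 0 := by
  rcases Int.even_or_odd (m - r) with ⟨j, hj⟩ | hodd
  · obtain ⟨k, rfl⟩ : ∃ k : ℕ, m = r + 2 * (k : ℤ) := ⟨j.toNat, by omega⟩
    exact congrFun h k
  · exact hx m hodd

theorem toMinus_eq_of_forall_le {r : ℤ} {x y : ∀ m, M.C m} (h : ∀ m, r ≤ m → x m = y m) :
    M.toMinus r x = M.toMinus r y :=
  funext fun _ => h _ (by omega)

theorem minusD_toMinus (r : ℤ) (x : ∀ m, M.C m) :
    minusD M r (M.toMinus r x) = M.toMinus (r + 1) (M.totalD x) := by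
  funext k
  have hβ := totalDown_apply M.β x (i := r + 2 * ((k + 1 : ℕ) : ℤ)) (j := r + 1 + 2 * (k : ℤ))
    (by push_cast; ring)
  have hδ := total_apply M.δ x (i := r + 2 * (k : ℤ)) (j := r + 1 + 2 * (k : ℤ)) (by ring)
  exact (congrArg₂ (· + ·) hβ hδ).symm.trans (add_comm _ _)

theorem total_minusD_apply {X : ∀ r, minusC M r} {x : ∀ m, M.C m} {i j : ℤ} (hij : i + 1 = j)
    (hx : M.toMinus i x = X i) : total (minusD M) X j = M.toMinus j (M.totalD x) := by
  subst hij
  rw [total_apply_add_one, ← hx, minusD_toMinus]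

end Mixed

/-- A morphism of mixed complexes. -/
structure IsMixedHom (f : ∀ n : ℤ, M₁.C n →ₗ[κ] M₂.C n) : Prop where
  map_δ : ∀ (n : ℤ) (x : M₁.C n), M₂.δ n (f n x) = f (n + 1) (M₁.δ n x)
  map_β : ∀ (n : ℤ) (x : M₁.C n), M₂.β n (f n x) = f (n - 1) (M₁.β n x)

variable {f : ∀ n : ℤ, M₁.C n →ₗ[κ] M₂.C n}

namespace IsMixedHom

theorem totalD_piMap (hf : IsMixedHom f) (x : ∀ m, M₁.C m) :
    M₂.totalD (piMap f x) = piMap f (M₁.totalD x) := by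
  simp only [Mixed.totalD, LinearMap.add_apply, map_add, total_piMap hf.map_δ,
    totalDown_piMap hf.map_β]

theorem minusD_minusMap (hf : IsMixedHom f) (r : ℤ) (ω : minusC M₁ r) :
    minusD M₂ r (minusMap f r ω) = minusMap f (r + 1) (minusD M₁ r ω) := by
  obtain ⟨x, -, rfl⟩ := Mixed.exists_toMinus_eq ω
  rw [Mixed.minusD_toMinus]
  exact (Mixed.minusD_toMinus r (piMap f x)).trans (congrArg _ (hf.totalD_piMap x))

theorem exists_sub_coneD_mem_coneFiltration (hf : IsMixedHom f)
    (hδ : ∀ a, IsQuasiIsoAt 1 (total M₁.δ) (total M₂.δ) f a)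
    (hβ : ∀ a, IsQuasiIsoAt (-1) (totalDown M₁.β) (totalDown M₂.β) f a) {s : ℤ}
    {z : (∀ m, M₁.C m) × ∀ m, M₂.C m}
    (hz : coneD M₁.totalD M₂.totalD f z ∈ coneFiltration κ M₁.C M₂.C 1 s) :
    ∃ w, z - coneD M₁.totalD M₂.totalD f w ∈ coneFiltration κ M₁.C M₂.C 1 (s - 1) := by
  have hDD := coneD_coneD M₁.totalD_totalD M₂.totalD_totalD hf.totalD_piMap
  obtain ⟨u, hu, hDu⟩ := exists_coneD_eq_of_mem_coneFiltration isUnit_one M₁.isLeadingPart_total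
    M₂.isLeadingPart_total (total_piMap hf.map_δ) hδ hDD hz (hDD z)
  have hbounded : z - u ∈ coneFiltration κ M₁.C M₂.C (-1) 1 :=
    ⟨fun m (hm : 1 < -1 * m) => (M₁.trivNeg m (by omega)).elim _ _,
      fun m (hm : 1 < -1 * m + 1) => (M₂.trivNeg m (by omega)).elim _ _⟩
  obtain ⟨w, -, hw⟩ := exists_coneD_eq_of_mem_coneFiltration isUnit_one.neg
    M₁.isLeadingPart_totalDown M₂.isLeadingPart_totalDown (totalDown_piMap hf.map_β) hβ hDD
    hbounded (by rw [map_sub, hDu, sub_self])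
  exact ⟨w, by rwa [hw, sub_sub_cancel]⟩

theorem exists_total_minusD_eq (hf : IsMixedHom f)
    (hδ : ∀ a, IsQuasiIsoAt 1 (total M₁.δ) (total M₂.δ) f a)
    (hβ : ∀ a, IsQuasiIsoAt (-1) (totalDown M₁.β) (totalDown M₂.β) f a) {r : ℤ}
    {X : ∀ r, minusC M₁ r} {Y : ∀ r, minusC M₂ r} (hX : total (minusD M₁) X (r + 1) = 0)
    (hXY : minusMap f r (X r) = total (minusD M₂) Y r) :
    ∃ X', total (minusD M₁) X' r = X r := by
  obtain ⟨x, hx, hxX⟩ := Mixed.exists_toMinus_eq (X r)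
  obtain ⟨y, hy, hyY⟩ := Mixed.exists_toMinus_eq (Y (r - 1))
  have hDx : ∀ m, r ≤ m → M₁.totalD x m = 0 := fun m hm =>
    Mixed.eq_zero_of_toMinus_eq_zero (Mixed.totalD_mem_vanishingOn_odd hx)
      (by rw [← Mixed.total_minusD_apply rfl hxX, hX]) (by omega)
  have hDxy : ∀ m, r ≤ m + 1 → (piMap f x - M₂.totalD y) m = 0 := by
    intro m hm
    refine Mixed.eq_zero_of_toMinus_eq_zero (sub_mem (mem_vanishingOn.2 fun m hm => ?_) ?_) ?_ hm
    · rw [coe_piMap, Pi.map_apply, hx m hm, map_zero]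
    · simpa only [sub_add_cancel] using Mixed.totalD_mem_vanishingOn_odd hy
    · rw [map_sub, ← Mixed.total_minusD_apply (sub_add_cancel r 1) hyY, ← hXY, ← hxX]
      exact sub_self _
  obtain ⟨w, hw⟩ := hf.exists_sub_coneD_mem_coneFiltration hδ hβ (s := r - 1) (z := (x, y))
    ⟨fun m (hm : r - 1 < 1 * m) => hDx m (by omega),
      fun m (hm : r - 1 < 1 * m + 1) => hDxy m (by omega)⟩
  refine ⟨fun s => M₁.toMinus s w.1, ?_⟩
  rw [Mixed.total_minusD_apply (sub_add_cancel r 1) rfl, ← hxX]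
  refine Mixed.toMinus_eq_of_forall_le fun m hm => ?_
  exact (sub_eq_zero.1 ((mem_coneFiltration.1 hw).1 m (by omega))).symm

theorem exists_sub_minusMap_eq_total_minusD (hf : IsMixedHom f)
    (hδ : ∀ a, IsQuasiIsoAt 1 (total M₁.δ) (total M₂.δ) f a)
    (hβ : ∀ a, IsQuasiIsoAt (-1) (totalDown M₁.β) (totalDown M₂.β) f a) {r : ℤ}
    {Y : ∀ r, minusC M₂ r} (hY : total (minusD M₂) Y (r + 1) = 0) :
    ∃ X Y', total (minusD M₁) X (r + 1) = 0 ∧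
      Y r - minusMap f r (X r) = total (minusD M₂) Y' r := by
  obtain ⟨y, hy, hyY⟩ := Mixed.exists_toMinus_eq (Y r)
  have hDy : ∀ m, r ≤ m → M₂.totalD y m = 0 := fun m hm =>
    Mixed.eq_zero_of_toMinus_eq_zero (Mixed.totalD_mem_vanishingOn_odd hy)
      (by rw [← Mixed.total_minusD_apply rfl hyY, hY]) (by omega)
  have hD : coneD M₁.totalD M₂.totalD f (0, y) ∈ coneFiltration κ M₁.C M₂.C 1 r := by
    rw [coneD_apply, map_zero, map_zero, zero_sub]
    exact ⟨fun _ _ => rfl, fun m (hm : r < 1 * m + 1) => neg_eq_zero.2 (hDy m (by omega))⟩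
  obtain ⟨w, hw⟩ := hf.exists_sub_coneD_mem_coneFiltration hδ hβ hD
  refine ⟨fun s => M₁.toMinus s w.1, fun s => M₂.toMinus s (-w.2), ?_, ?_⟩
  · rw [Mixed.total_minusD_apply rfl rfl, ← map_zero (M₁.toMinus (r + 1))]
    refine Mixed.toMinus_eq_of_forall_le fun m hm => ?_
    exact (sub_eq_zero.1 ((mem_coneFiltration.1 hw).1 m (by omega))).symm
  · rw [Mixed.total_minusD_apply (sub_add_cancel r 1) rfl, ← hyY]
    refine Mixed.toMinus_eq_of_forall_le (x := y - piMap f w.1) fun m hm => ?_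
    have hym : y m - (f m (w.1 m) - M₂.totalD w.2 m) = 0 :=
      (mem_coneFiltration.1 hw).2 m (by omega)
    rw [Pi.sub_apply, coe_piMap, Pi.map_apply, sub_eq_zero.1 hym, map_neg, Pi.neg_apply,
      sub_sub_cancel_left]

theorem isQuasiIsoAt_minusMap (hf : IsMixedHom f)
    (hδ : ∀ a, IsQuasiIsoAt 1 (total M₁.δ) (total M₂.δ) f a)
    (hβ : ∀ a, IsQuasiIsoAt (-1) (totalDown M₁.β) (totalDown M₂.β) f a) (r : ℤ) :
    IsQuasiIsoAt 1 (total (minusD M₁)) (total (minusD M₂)) (minusMap f) r where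
  injective _ _ hX hXY := hf.exists_total_minusD_eq hδ hβ hX hXY
  surjective _ hY := hf.exists_sub_minusMap_eq_total_minusD hδ hβ hY

end IsMixedHom

end MixedComplex

end CDGA

namespace CDGA

/-- if a morphism of mixed complexes induces isomorphisms on both the
cohomology `H^n(C, δ)` and the homology `H_n(C, β)` for every `n`, then it induces an
isomorphism on the negative theory `^-H^r_β` for every `r`. -/
theorem statement4 (κ : Type) [Field κ] (M₁ M₂ : Mixed κ)
    (f : ∀ n : ℤ, M₁.C n →ₗ[κ] M₂.C n)
    (hδ : ∀ (n : ℤ) (x : M₁.C n), M₂.δ n (f n x) = f (n + 1) (M₁.δ n x))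
    (hβ : ∀ (n : ℤ) (x : M₁.C n), M₂.β n (f n x) = f (n - 1) (M₁.β n x))
    (hisoδ : ∀ n : ℤ, Function.Bijective (Hmap₂ M₁.δ M₂.δ n n (f n)))
    (hisoβ : ∀ n : ℤ, Function.Bijective (hMap₂ M₁.β M₂.β n n (f n))) :
    ∀ r : ℤ, Function.Bijective (Hmap₂ (minusD M₁) (minusD M₂) r r (minusMap f r)) := by
  intro r
  have hf : IsMixedHom f := ⟨hδ, hβ⟩
  have hqδ := fun a => (bijective_Hmap₂_iff hδ a).1 (hisoδ a)
  have hqβ := fun a => (bijective_hMap₂_iff hβ a).1 (hisoβ a)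
  exact (bijective_Hmap₂_iff hf.minusD_minusMap r).2 (hf.isQuasiIsoAt_minusMap hqδ hqβ r)

end CDGA
end

section
/- Let (C, δ, β) be a mixed complex over κ that is β-acyclic, i.e. β₁ : C¹ → C⁰ is surjective and ker(β_n) = im(β_{n+1}) for every n ≥ 1. The image Im(β) ⊆ C is preserved by δ (since δ(βη) = −β(δη)), so (Im(β), δ) is a cochain complex. Then the map j : Im(β)^r → ^+C^r defined by j(ω) = (ω, 0, 0, …) is a morphism of cochain complexes from (Im(β), δ) to (^+C, ^+D_β), and it induces an isomorphism H^r(Im(β), δ) ≅ ^+H^r_β for every r. -/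
open LinearMap DirectSum

namespace CDGA

variable {κ : Type} [Field κ]

/-- The image of `β` in degree `n`, `Im(β)^n = β(C^{n+1}) ⊆ C^n`. -/
def ImB (M : Mixed κ) (n : ℤ) : Submodule κ (M.C n) :=
  LinearMap.range ((fcast (show n + 1 - 1 = n by ring)).comp (M.β (n + 1)))

open Classical in
/-- The differential of the cochain complex `(Im(β), δ)` (restriction of `δ`; junk value
`0` if `δ` did not preserve `Im(β)` — it always does, since `δ(βη) = -β(δη)`). -/
noncomputable def dImB (M : Mixed κ) (n : ℤ) : ↥(ImB M n) →ₗ[κ] ↥(ImB M (n + 1)) :=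
  if h : ∀ x : ↥(ImB M n), M.δ n x.1 ∈ ImB M (n + 1) then
    LinearMap.codRestrict (ImB M (n + 1)) ((M.δ n).comp (ImB M n).subtype) h
  else 0

/-- The map `j : Im(β)^r → ^+C^r`, `ω ↦ (ω, 0, 0, …)`. -/
def jImB (M : Mixed κ) (r : ℤ) : ↥(ImB M r) →ₗ[κ] plusC M r :=
  LinearMap.pi fun k : ℕ =>
    match k with
    | 0 => (fcast (show r = r - 2 * ((0 : ℕ) : ℤ) by push_cast; ring)).comp (ImB M r).subtype
    | (_ + 1) => 0

/-!
An injective morphism of cochain complexes whose cokernel is acyclic induces isomorphisms on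
cohomology, so it is enough to show that every `ω` in `^+C` with `Dω` in the image of `j` is of the
form `j x + Dη`.

The sequences `0 → ^+C^{r-2} → ^+C^r → C^r → 0` allow an induction on `r`: write `ω = (z, ω')` with
`ω'` in `^+C^{r-2}`. Then `Dω'` is again concentrated in the top component, so
`ω' = (βy, 0, …) + Dη'` for some `y` and `η'`, and `ω - D(y, η') = (z - δy, 0, 0, …)`. As `D² = 0`,
the differential of the right-hand side is still concentrated in the top component, which means
`β(z - δy) = 0`, and `β`-acyclicity puts `z - δy` in `Im(β)`.
-/

section Reindexing

variable {ι : Type} {C : ι → Type} [∀ i, AddCommGroup (C i)] [∀ i, Module κ (C i)] {σ : ι → ι}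

theorem fcast_fcast {m n p : ι} (h : m = n) (h' : n = p) (x : C m) :
    fcast (κ := κ) h' (fcast (κ := κ) h x) = fcast (κ := κ) (h.trans h') x := by
  subst h h'
  rfl

/-- The component from degree `m` to degree `n` of a graded map `f` which shifts degrees by `σ`
(for instance `n ↦ n + 1` or `n ↦ n - 1`). The target index need only be propositionally equal to
`σ m`, so that casts can be absorbed instead of being carried through computations. -/
def mapTo (f : ∀ i, C i →ₗ[κ] C (σ i)) {m n : ι} (h : σ m = n) : C m →ₗ[κ] C n :=
  (fcast h).comp (f m)

theorem mapTo_fcast (f : ∀ i, C i →ₗ[κ] C (σ i)) {m m' n : ι} (e : m = m') (h : σ m' = n)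
    (x : C m) : mapTo f h (fcast (κ := κ) e x) = mapTo f ((congrArg σ e).trans h) x := by
  subst e
  rfl

theorem fcast_mapTo (f : ∀ i, C i →ₗ[κ] C (σ i)) {m n n' : ι} (h : σ m = n) (e : n = n')
    (x : C m) : fcast (κ := κ) e (mapTo f h x) = mapTo f (h.trans e) x := by
  subst e
  rfl

end Reindexing

section InducedMapOnCohomology

variable {C₁ C₂ : ℤ → Type}
  [∀ n, AddCommGroup (C₁ n)] [∀ n, Module κ (C₁ n)]
  [∀ n, AddCommGroup (C₂ n)] [∀ n, Module κ (C₂ n)]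
  {d₁ : ∀ n, C₁ n →ₗ[κ] C₁ (n + 1)} {d₂ : ∀ n, C₂ n →ₗ[κ] C₂ (n + 1)}
  {f : ∀ n, C₁ n →ₗ[κ] C₂ n}

theorem mem_cobound (d : ∀ n, C₁ n →ₗ[κ] C₁ (n + 1)) {a r : ℤ} (h : a + 1 = r) {x : C₁ r} :
    x ∈ cobound d r ↔ ∃ y, mapTo d h y = x := by
  obtain rfl : a = r - 1 := by omega
  rfl

theorem cobound_le_cocycles (hd : ∀ n x, d₁ (n + 1) (d₁ n x) = 0) (r : ℤ) :
    cobound d₁ r ≤ cocycles d₁ r := by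
  obtain ⟨a, rfl⟩ : ∃ a, r = a + 1 := ⟨r - 1, by ring⟩
  intro x hx
  obtain ⟨y, rfl⟩ := (mem_cobound d₁ rfl).1 hx
  exact hd a y

theorem cocycles_le_comap (hf : ∀ n x, d₂ n (f n x) = f (n + 1) (d₁ n x)) (r : ℤ) :
    cocycles d₁ r ≤ (cocycles d₂ r).comap (f r) := by
  intro x (hx : d₁ r x = 0)
  change d₂ r (f r x) = 0
  rw [hf, hx, map_zero]

theorem cobound_le_comap (hf : ∀ n x, d₂ n (f n x) = f (n + 1) (d₁ n x)) (r : ℤ) :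
    cobound d₁ r ≤ (cobound d₂ r).comap (f r) := by
  obtain ⟨a, rfl⟩ : ∃ a, r = a + 1 := ⟨r - 1, by ring⟩
  intro x hx
  obtain ⟨y, rfl⟩ := (mem_cobound d₁ rfl).1 hx
  exact (mem_cobound d₂ rfl).2 ⟨f a y, hf a y⟩

theorem Hmap₂_mk (hf : ∀ n x, d₂ n (f n x) = f (n + 1) (d₁ n x)) {r : ℤ} (x : cocycles d₁ r) :
    Hmap₂ d₁ d₂ r r (f r) (Submodule.Quotient.mk x) =
      Submodule.Quotient.mk ⟨f r x, cocycles_le_comap hf r x.2⟩ := by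
  rw [Hmap₂, dif_pos ⟨cocycles_le_comap hf r, cobound_le_comap hf r⟩]
  rfl

/-- The hypothesis `hcoker` says that the cokernel complex is acyclic. -/
theorem Hmap₂_bijective_of_injective (hd : ∀ n x, d₂ (n + 1) (d₂ n x) = 0)
    (hf : ∀ n x, d₂ n (f n x) = f (n + 1) (d₁ n x)) (hinj : ∀ n, Function.Injective (f n))
    (hcoker : ∀ n x, d₂ n x ∈ range (f (n + 1)) → x ∈ range (f n) ⊔ cobound d₂ n) (r : ℤ) :
    Function.Bijective (Hmap₂ d₁ d₂ r r (f r)) := by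
  constructor
  · refine (injective_iff_map_eq_zero _).2 fun q hq => ?_
    obtain ⟨x, rfl⟩ := Submodule.Quotient.mk_surjective _ q
    rw [Hmap₂_mk hf, Submodule.Quotient.mk_eq_zero] at hq
    rw [Submodule.Quotient.mk_eq_zero]
    change f r x ∈ cobound d₂ r at hq
    change x.1 ∈ cobound d₁ r
    generalize x.1 = x at hq ⊢
    obtain ⟨a, rfl⟩ : ∃ a, r = a + 1 := ⟨r - 1, by ring⟩
    obtain ⟨y, hy : d₂ a y = f (a + 1) x⟩ := (mem_cobound d₂ rfl).1 hq
    obtain ⟨_, ⟨z, rfl⟩, b, hb, hzb⟩ := Submodule.mem_sup.1 (hcoker a y ⟨x, hy.symm⟩)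
    have hb0 : d₂ a b = 0 := cobound_le_cocycles hd a hb
    refine (mem_cobound d₁ rfl).2 ⟨z, hinj _ ?_⟩
    calc f (a + 1) (d₁ a z) = d₂ a (f a z + b) := by rw [map_add, hb0, add_zero, hf]
      _ = f (a + 1) x := by rw [hzb, hy]
  · intro q
    obtain ⟨⟨y, hy : d₂ r y = 0⟩, rfl⟩ := Submodule.Quotient.mk_surjective _ q
    obtain ⟨_, ⟨x, rfl⟩, b, hb, rfl⟩ :=
      Submodule.mem_sup.1 (hcoker r y (hy ▸ Submodule.zero_mem _))
    have hb0 : d₂ r b = 0 := cobound_le_cocycles hd r hb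
    have hx : d₁ r x = 0 := hinj _ (by rw [← hf, map_zero, ← hy, map_add, hb0, add_zero])
    refine ⟨Submodule.Quotient.mk ⟨x, hx⟩, ?_⟩
    rw [Hmap₂_mk hf, Submodule.Quotient.eq]
    change f r x - (f r x + b) ∈ cobound d₂ r
    rw [sub_add_cancel_left]
    exact Submodule.neg_mem _ hb

end InducedMapOnCohomology

section MixedComplex

variable {M : Mixed κ}

theorem δ_δ {m n p : ℤ} (h : m + 1 = n) (h' : n + 1 = p) (x : M.C m) :
    mapTo M.δ h' (mapTo M.δ h x) = 0 := by
  subst h h'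
  exact M.δδ m x

theorem β_β {m n p : ℤ} (h : m - 1 = n) (h' : n - 1 = p) (x : M.C m) :
    mapTo M.β h' (mapTo M.β h x) = 0 := by
  subst h h'
  exact M.ββ m x

theorem β_δ {m n p : ℤ} (h : m + 1 = n) (h' : n - 1 = m) (k : m - 1 = p) (k' : p + 1 = m)
    (x : M.C m) : mapTo M.β h' (mapTo M.δ h x) = -mapTo M.δ k' (mapTo M.β k x) := by
  subst h k
  exact eq_neg_of_add_eq_zero_left (M.βδ m x)

theorem mem_ImB {m n : ℤ} (h : m - 1 = n) {x : M.C n} :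
    x ∈ ImB M n ↔ ∃ y, mapTo M.β h y = x := by
  obtain rfl : m = n + 1 := by omega
  rfl

theorem δ_mem_ImB {n : ℤ} {x : M.C n} (hx : x ∈ ImB M n) : M.δ n x ∈ ImB M (n + 1) := by
  obtain ⟨y, rfl⟩ := (mem_ImB (add_sub_cancel_right n 1)).1 hx
  refine (mem_ImB (add_sub_cancel_right (n + 1) 1)).2 ⟨-mapTo M.δ rfl y, ?_⟩
  rw [map_neg, β_δ rfl _ (add_sub_cancel_right n 1) rfl, neg_neg]
  rfl

theorem coe_dImB (n : ℤ) (x : ImB M n) : (dImB M n x : M.C (n + 1)) = M.δ n x := by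
  rw [dImB, dif_pos fun x : ImB M n => δ_mem_ImB x.2]
  rfl

/-- `β`-acyclicity: the homology of `(C, β)` vanishes in every degree. In degree `0` this says that
`β₁ : C¹ → C⁰` is surjective, because `C⁻¹ = 0`. -/
def IsBetaAcyclic (M : Mixed κ) : Prop :=
  ∀ n, ker (M.β n) ≤ ImB M n

theorem isBetaAcyclic_of_surjective (hsurj : Function.Surjective (M.β 1))
    (hacyc : ∀ n : ℤ, 1 ≤ n → ker (M.β n) = ImB M n) : IsBetaAcyclic M := by
  intro n x hx
  rcases lt_trichotomy n 0 with hn | rfl | hn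
  · have := M.trivNeg n hn
    rw [Subsingleton.elim x 0]
    exact Submodule.zero_mem _
  · exact (mem_ImB (sub_self 1)).2 (hsurj x)
  · exact hacyc n hn ▸ hx

end MixedComplex

section PlusComplex

variable {M : Mixed κ}

variable (M) in
/-- The inclusion `C^r → ^+C^r`, `z ↦ (z, 0, 0, …)`, of which `jImB` is the restriction to
`Im(β)`. -/
def topIncl (r : ℤ) : M.C r →ₗ[κ] plusC M r :=
  LinearMap.pi fun k : ℕ =>
    match k with
    | 0 => fcast (show r = r - 2 * ((0 : ℕ) : ℤ) by simp)
    | _ + 1 => 0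

theorem jImB_apply (r : ℤ) (x : ImB M r) : jImB M r x = topIncl M r x := by
  funext k
  cases k <;> rfl

theorem topIncl_apply_zero (r : ℤ) (z : M.C r) :
    topIncl M r z 0 = fcast (κ := κ) (show r = r - 2 * ((0 : ℕ) : ℤ) by simp) z :=
  rfl

theorem topIncl_apply_succ (r : ℤ) (z : M.C r) (k : ℕ) : topIncl M r z (k + 1) = 0 :=
  rfl

theorem inclS2_apply_zero {a b : ℤ} (h : a + 2 = b) (ω : plusC M a) : inclS2 M a b h ω 0 = 0 :=
  rfl

theorem inclS2_apply_succ {a b : ℤ} (h : a + 2 = b) (ω : plusC M a) (k : ℕ) :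
    inclS2 M a b h ω (k + 1) =
      fcast (κ := κ) (show a - 2 * (k : ℤ) = b - 2 * ((k + 1 : ℕ) : ℤ) by omega) (ω k) :=
  rfl

theorem plusD_apply_zero {a r : ℤ} (h : a + 1 = r) (ω : plusC M a) :
    mapTo (plusD M) h ω 0 =
      mapTo M.δ (show a - 2 * ((0 : ℕ) : ℤ) + 1 = r - 2 * ((0 : ℕ) : ℤ) by omega) (ω 0) := by
  subst h
  rfl

theorem plusD_apply_succ {a r : ℤ} (h : a + 1 = r) (ω : plusC M a) (k : ℕ) :
    mapTo (plusD M) h ω (k + 1) =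
      mapTo M.δ (show a - 2 * ((k + 1 : ℕ) : ℤ) + 1 = r - 2 * ((k + 1 : ℕ) : ℤ) by omega)
          (ω (k + 1)) +
        mapTo M.β (show a - 2 * (k : ℤ) - 1 = r - 2 * ((k + 1 : ℕ) : ℤ) by omega) (ω k) := by
  subst h
  rfl

theorem topProj_topIncl (r : ℤ) (z : M.C r) : topProj M r (topIncl M r z) = z :=
  fcast_fcast _ _ z

theorem topIncl_injective (r : ℤ) : Function.Injective (topIncl M r) :=
  Function.LeftInverse.injective (topProj_topIncl r)

theorem projS2_topIncl {a b : ℤ} (h : a + 2 = b) (z : M.C b) :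
    projS2 M b a h (topIncl M b z) = 0 := by
  funext k
  exact map_zero (fcast (κ := κ) (C := M.C) _)

theorem projS2_inclS2 {a b : ℤ} (h : a + 2 = b) (ω : plusC M a) :
    projS2 M b a h (inclS2 M a b h ω) = ω := by
  funext k
  exact fcast_fcast _ _ (ω k)

theorem topIncl_add_inclS2 {a b : ℤ} (h : a + 2 = b) (ω : plusC M b) :
    topIncl M b (topProj M b ω) + inclS2 M a b h (projS2 M b a h ω) = ω := by
  funext k
  cases k with
  | zero => exact (add_zero _).trans (fcast_fcast _ _ (ω 0))
  | succ k => exact (zero_add _).trans (fcast_fcast _ _ (ω (k + 1)))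

theorem eq_zero_of_topIncl_add_inclS2_eq {a b : ℤ} (h : a + 2 = b) {z w : M.C b} {ω : plusC M a}
    (he : topIncl M b z + inclS2 M a b h ω = topIncl M b w) : ω = 0 := by
  simpa only [map_add, projS2_topIncl, projS2_inclS2, zero_add] using congrArg (projS2 M b a h) he

theorem plusD_topIncl {a r s : ℤ} (h : a + 1 = r) (h' : a - 1 = s) (hs : s + 2 = r) (z : M.C a) :
    mapTo (plusD M) h (topIncl M a z) =
      topIncl M r (mapTo M.δ h z) + inclS2 M s r hs (topIncl M s (mapTo M.β h' z)) := by
  funext k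
  rw [Pi.add_apply]
  rcases k with _ | _ | k
  · rw [plusD_apply_zero, inclS2_apply_zero, add_zero (_ : M.C _), topIncl_apply_zero,
      topIncl_apply_zero, mapTo_fcast, fcast_mapTo]
  · rw [plusD_apply_succ, inclS2_apply_succ, topIncl_apply_succ, topIncl_apply_succ, map_zero,
      topIncl_apply_zero, topIncl_apply_zero, mapTo_fcast, fcast_mapTo, fcast_mapTo]
  · rw [plusD_apply_succ, inclS2_apply_succ]
    simp only [topIncl_apply_succ, map_zero]

theorem plusD_inclS2 {a b r s : ℤ} (h : a + 2 = b) (ha : a + 1 = r) (hb : b + 1 = s)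
    (h' : r + 2 = s) (ω : plusC M a) :
    mapTo (plusD M) hb (inclS2 M a b h ω) = inclS2 M r s h' (mapTo (plusD M) ha ω) := by
  funext k
  rcases k with _ | _ | k
  · rw [plusD_apply_zero, inclS2_apply_zero, inclS2_apply_zero, map_zero]
  · rw [plusD_apply_succ, inclS2_apply_succ, inclS2_apply_succ, inclS2_apply_zero, map_zero,
      add_zero (_ : M.C _), plusD_apply_zero, mapTo_fcast, fcast_mapTo]
  · rw [plusD_apply_succ, inclS2_apply_succ, inclS2_apply_succ, inclS2_apply_succ,
      plusD_apply_succ, map_add, mapTo_fcast, mapTo_fcast, fcast_mapTo, fcast_mapTo]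

theorem plusC_eq_zero_of_neg {r : ℤ} (hr : r < 0) (ω : plusC M r) : ω = 0 := by
  funext k
  have := M.trivNeg (r - 2 * (k : ℤ)) (by omega)
  exact Subsingleton.elim _ _

@[elab_as_elim]
theorem plusC_induction {P : ∀ r, plusC M r → Prop} (zero : ∀ r, P r 0)
    (step : ∀ r (z : M.C (r + 2)) (ω : plusC M r),
      P r ω → P (r + 2) (topIncl M (r + 2) z + inclS2 M r (r + 2) rfl ω))
    (r : ℤ) (ω : plusC M r) : P r ω := by
  obtain ⟨n, hn⟩ : ∃ n : ℕ, r < 2 * n := ⟨r.toNat + 1, by omega⟩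
  induction n generalizing r with
  | zero =>
    rw [plusC_eq_zero_of_neg (by simpa using hn) ω]
    exact zero r
  | succ n ih =>
    obtain ⟨s, rfl⟩ : ∃ s, r = s + 2 := ⟨r - 2, by ring⟩
    rw [← topIncl_add_inclS2 rfl ω]
    exact step s _ _ (ih s _ (by omega))

theorem plusD_plusD {a b c : ℤ} (h : a + 1 = b) (h' : b + 1 = c) (ω : plusC M a) :
    mapTo (plusD M) h' (mapTo (plusD M) h ω) = 0 := by
  induction a, ω using plusC_induction generalizing b c with
  | zero a => rw [map_zero, map_zero]
  | step a z ω ih =>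
    have hz : mapTo (plusD M) h' (mapTo (plusD M) h (topIncl M (a + 2) z)) = 0 := by
      rw [plusD_topIncl h (s := a + 1) (by omega) (by omega), map_add,
        plusD_topIncl h' (s := a + 2) (by omega) (by omega), δ_δ,
        plusD_inclS2 _ (r := a + 2) (by omega) _ (by omega),
        plusD_topIncl (r := a + 2) (s := a) (by omega) (by omega) (by omega), β_β,
        β_δ h (by omega) (p := a + 1) (by omega) (by omega)]
      simp only [map_zero, map_neg, zero_add, add_zero, neg_add_cancel]
    rw [map_add, map_add, hz, plusD_inclS2 _ (r := a + 1) rfl _ (by omega),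
      plusD_inclS2 _ (r := a + 2) (by omega) _ (by omega), ih, map_zero, add_zero]

theorem plusD_jImB (n : ℤ) (x : ImB M n) :
    plusD M n (jImB M n x) = jImB M (n + 1) (dImB M n x) := by
  obtain ⟨y, hy⟩ := (mem_ImB (add_sub_cancel_right n 1)).1 x.2
  have hx : mapTo M.β (rfl : n - 1 = n - 1) x.1 = 0 := hy ▸ β_β _ _ y
  have hD := plusD_topIncl rfl rfl (by omega) x.1
  rw [hx, map_zero, map_zero, add_zero] at hD
  rw [jImB_apply, jImB_apply, coe_dImB]
  exact hD

theorem jImB_injective (r : ℤ) : Function.Injective (jImB M r) := by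
  intro x y hxy
  rw [jImB_apply, jImB_apply] at hxy
  exact Subtype.ext (topIncl_injective r hxy)

theorem IsBetaAcyclic.mem_ImB_of_plusD_topIncl (hM : IsBetaAcyclic M) {r s : ℤ} (h : r + 1 = s)
    {z : M.C r} (hz : mapTo (plusD M) h (topIncl M r z) ∈ range (topIncl M s)) : z ∈ ImB M r := by
  obtain ⟨w, hw⟩ := hz
  rw [plusD_topIncl h rfl (by omega)] at hw
  exact hM r (topIncl_injective _
    ((eq_zero_of_topIncl_add_inclS2_eq _ hw.symm).trans (map_zero _).symm))

theorem IsBetaAcyclic.exists_eq_topIncl_add_plusD (hM : IsBetaAcyclic M) {q r s : ℤ}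
    (hq : q + 1 = r) (hs : r + 1 = s) {ω : plusC M r}
    (hω : mapTo (plusD M) hs ω ∈ range (topIncl M s)) :
    ∃ z ∈ ImB M r, ∃ η : plusC M q, ω = topIncl M r z + mapTo (plusD M) hq η := by
  induction r, ω using plusC_induction generalizing q s with
  | zero r => exact ⟨0, Submodule.zero_mem _, 0, by simp only [map_zero, add_zero]⟩
  | step r z ω ih =>
    obtain ⟨w, hw⟩ := hω
    have hω' : mapTo (plusD M) rfl ω = topIncl M (r + 1) (-mapTo M.β (by omega) z) := by
      rw [map_add, plusD_topIncl hs (s := r + 1) (by omega) (by omega),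
        plusD_inclS2 _ (r := r + 1) rfl _ (by omega), add_assoc, ← map_add] at hw
      rw [map_neg]
      exact eq_neg_of_add_eq_zero_right (eq_zero_of_topIncl_add_inclS2_eq _ hw.symm)
    obtain ⟨x, hx, η, hη⟩ := ih (q := r - 1) (by omega) rfl ⟨_, hω'.symm⟩
    obtain ⟨y, rfl⟩ := (mem_ImB (m := q) (by omega)).1 hx
    set θ : plusC M q := topIncl M q y + inclS2 M (r - 1) q (by omega) η
    have hdecomp : topIncl M (r + 2) z + inclS2 M r (r + 2) rfl ω =
        topIncl M (r + 2) (z - mapTo M.δ hq y) + mapTo (plusD M) hq θ := by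
      rw [map_add, plusD_topIncl hq (s := r) (by omega) rfl,
        plusD_inclS2 _ (r := r) (by omega) _ rfl, hη, map_add, map_sub]
      abel
    refine ⟨_, hM.mem_ImB_of_plusD_topIncl hs ⟨w, ?_⟩, θ, hdecomp⟩
    rw [hw, hdecomp, map_add, plusD_plusD, add_zero]

theorem IsBetaAcyclic.mem_range_jImB_sup_cobound (hM : IsBetaAcyclic M) (r : ℤ) (ω : plusC M r)
    (hω : plusD M r ω ∈ range (jImB M (r + 1))) : ω ∈ range (jImB M r) ⊔ cobound (plusD M) r := by
  obtain ⟨x, hx⟩ := hω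
  rw [jImB_apply] at hx
  have hr : r - 1 + 1 = r := sub_add_cancel r 1
  obtain ⟨z, hz, η, rfl⟩ := hM.exists_eq_topIncl_add_plusD hr rfl ⟨_, hx⟩
  exact Submodule.add_mem_sup ⟨⟨z, hz⟩, jImB_apply r _⟩ ((mem_cobound _ hr).2 ⟨η, rfl⟩)

end PlusComplex

/-- if the mixed complex `(C, δ, β)` is `β`-acyclic (i.e. `β₁ : C¹ → C⁰` is
surjective and `ker β_n = im β_{n+1}` for `n ≥ 1`), then `δ` preserves `Im(β)`, the map
`j : (Im(β), δ) → (^+C, ^+D_β)`, `j(ω) = (ω, 0, 0, …)`, is a morphism of cochain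
complexes, and `j` induces an isomorphism `H^r(Im(β), δ) ≅ ^+H^r_β` for every `r`. -/
theorem statement5 (κ : Type) [Field κ] (M : Mixed κ)
    (hsurj : Function.Surjective (M.β 1))
    (hacyc : ∀ n : ℤ, 1 ≤ n → LinearMap.ker (M.β n) = ImB M n) :
    (∀ (n : ℤ) (x : ↥(ImB M n)), M.δ n x.1 ∈ ImB M (n + 1)) ∧
    (∀ (n : ℤ) (x : ↥(ImB M n)), plusD M n (jImB M n x) = jImB M (n + 1) (dImB M n x)) ∧
    (∀ r : ℤ, Function.Bijective (Hmap₂ (dImB M) (plusD M) r r (jImB M r))) := by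
  have hM : IsBetaAcyclic M := isBetaAcyclic_of_surjective hsurj hacyc
  exact ⟨fun _ x => δ_mem_ImB x.2, plusD_jImB,
    Hmap₂_bijective_of_injective (fun _ => plusD_plusD rfl rfl) plusD_jImB jImB_injective
      hM.mem_range_jImB_sup_cobound⟩

end CDGA
end
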